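/- arXiv:2212.14756 — 2 statements merged into one kernel-verified Lean document; each statement's English description precedes it below -/
import Mathlib

section
/- Let (A, g, h, f, p) be a tense H-algebra. The assignments F ↦ θ_F, where θ_F = {(x, y) : (x ⇨ y) ⊓ (y ⇨ x) ∈ F}, and θ ↦ [1]_θ = {x : (x, 1) ∈ θ} are mutually inverse, inclusion-preserving bijections between the set of negative tense filters of A and the set of congruences on (A, g, h, f, p) (equivalence relations on A compatible with ⊓, ⊔, ⇨, g, h, f and p). -/
structure IsTenseH {A : Type*} [HeytingAlgebra A] (g h f p : A → A) : Prop where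
  t1g : g ⊤ = ⊥
  t1h : h ⊤ = ⊥
  t2f : f ⊥ = ⊤
  t2p : p ⊥ = ⊤
  t3g : ∀ x y : A, g (x ⊓ y) = g x ⊔ g y
  t3h : ∀ x y : A, h (x ⊓ y) = h x ⊔ h y
  t4f : ∀ x y : A, f (x ⊔ y) = f x ⊓ f y
  t4p : ∀ x y : A, p (x ⊔ y) = p x ⊓ p y
  t5gh : ∀ x : A, g (h x) ≤ x
  t5hg : ∀ x : A, h (g x) ≤ x
  t6pf : ∀ x : A, x ≤ p (f x)
  t6fp : ∀ x : A, x ≤ f (p x)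
  t7g : ∀ x y : A, g x ⊓ f y ≤ g (x ⊔ y)
  t7h : ∀ x y : A, h x ⊓ p y ≤ h (x ⊔ y)
  t8f : ∀ x y : A, f (x ⊓ y) ≤ f x ⊔ g y
  t8p : ∀ x y : A, p (x ⊓ y) ≤ p x ⊔ h y

def IsLatFilter {A : Type*} [HeytingAlgebra A] (F : Set A) : Prop :=
  F.Nonempty ∧ (∀ x y : A, x ∈ F → x ≤ y → y ∈ F) ∧ (∀ x y : A, x ∈ F → y ∈ F → x ⊓ y ∈ F)

def IsLatIdeal {A : Type*} [HeytingAlgebra A] (I : Set A) : Prop :=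
  I.Nonempty ∧ (∀ x y : A, x ∈ I → y ≤ x → y ∈ I) ∧ (∀ x y : A, x ∈ I → y ∈ I → x ⊔ y ∈ I)

def IsPrimeFilter {A : Type*} [HeytingAlgebra A] (F : Set A) : Prop :=
  IsLatFilter F ∧ (⊥ : A) ∉ F ∧ ∀ x y : A, x ⊔ y ∈ F → x ∈ F ∨ y ∈ F

def IsNegTenseFilter {A : Type*} [HeytingAlgebra A] (g h f p : A → A) (F : Set A) : Prop :=
  IsLatFilter F ∧
    ∀ u ∈ ({g, h, f, p} : Set (A → A)), ∀ x y : A, x ⇨ y ∈ F → u y ⇨ u x ∈ F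

def thetaF {A : Type*} [HeytingAlgebra A] (F : Set A) (x y : A) : Prop :=
  (x ⇨ y) ⊓ (y ⇨ x) ∈ F

def IsTenseCongruence {A : Type*} [HeytingAlgebra A] (g h f p : A → A)
    (θ : A → A → Prop) : Prop :=
  Equivalence θ ∧
    (∀ x₁ y₁ x₂ y₂ : A, θ x₁ y₁ → θ x₂ y₂ → θ (x₁ ⊓ x₂) (y₁ ⊓ y₂)) ∧
    (∀ x₁ y₁ x₂ y₂ : A, θ x₁ y₁ → θ x₂ y₂ → θ (x₁ ⊔ x₂) (y₁ ⊔ y₂)) ∧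
    (∀ x₁ y₁ x₂ y₂ : A, θ x₁ y₁ → θ x₂ y₂ → θ (x₁ ⇨ x₂) (y₁ ⇨ y₂)) ∧
    ∀ u ∈ ({g, h, f, p} : Set (A → A)), ∀ x y : A, θ x y → θ (u x) (u y)

def Nop {A : Type*} [HeytingAlgebra A] (g h : A → A) (a : A) : A :=
  (g a ⇨ ⊥) ⊓ (h a ⇨ ⊥)

def NIter {A : Type*} [HeytingAlgebra A] (N : A → A) : ℕ → A → A
  | 0, a => a
  | n + 1, a => N (NIter N n a)

def NPar {A : Type*} [HeytingAlgebra A] (N : A → A) : ℕ → A → A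
  | 0, a => NIter N 0 a
  | k + 1, a => NPar N k a ⊓ NIter N (k + 1) a

theorem thetaF_iff_aux {A : Type*} [HeytingAlgebra A] {F : Set A} (hF : IsLatFilter F) (x y : A) :
    thetaF F x y ↔ ∃ c ∈ F, c ⊓ x ≤ y ∧ c ⊓ y ≤ x := by
  unfold thetaF
  constructor
  · intro hc
    exact ⟨_, hc, le_himp_iff.1 inf_le_left, le_himp_iff.1 inf_le_right⟩
  · rintro ⟨c, hc, h1, h2⟩
    exact hF.2.1 _ _ hc (le_inf (le_himp_iff.2 h1) (le_himp_iff.2 h2))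

theorem himp_aux {A : Type*} [HeytingAlgebra A] {c d x y z w : A} (h1 : c ⊓ y ≤ x)
    (h2 : d ⊓ z ≤ w) : (c ⊓ d) ⊓ (x ⇨ z) ≤ y ⇨ w := by
  rw [le_himp_iff]
  have a1 : (c ⊓ d) ⊓ (x ⇨ z) ⊓ y ≤ x :=
    le_trans (le_inf (inf_le_left.trans (inf_le_left.trans inf_le_left)) inf_le_right) h1
  have a2 : (c ⊓ d) ⊓ (x ⇨ z) ⊓ y ≤ z :=
    le_trans (le_inf (inf_le_left.trans inf_le_right) a1) himp_inf_le
  exact le_trans (le_inf (inf_le_left.trans (inf_le_left.trans inf_le_right)) a2) h2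

theorem sup_aux {A : Type*} [HeytingAlgebra A] {c d x y z w : A} (h1 : c ⊓ x ≤ y)
    (h2 : d ⊓ z ≤ w) : (c ⊓ d) ⊓ (x ⊔ z) ≤ y ⊔ w := by
  rw [inf_sup_left]
  exact sup_le_sup ((inf_le_inf_right _ inf_le_left).trans h1)
    ((inf_le_inf_right _ inf_le_right).trans h2)

theorem inf_aux {A : Type*} [HeytingAlgebra A] {c d x y z w : A} (h1 : c ⊓ x ≤ y)
    (h2 : d ⊓ z ≤ w) : (c ⊓ d) ⊓ (x ⊓ z) ≤ y ⊓ w :=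
  le_inf ((inf_le_inf inf_le_left inf_le_left).trans h1)
    ((inf_le_inf inf_le_right inf_le_right).trans h2)

theorem trans_aux {A : Type*} [HeytingAlgebra A] {c d x y z : A} (h1 : c ⊓ x ≤ y)
    (h2 : d ⊓ y ≤ z) : (c ⊓ d) ⊓ x ≤ z :=
  le_trans (le_inf (inf_le_left.trans inf_le_right)
    ((inf_le_inf_right _ inf_le_left).trans h1)) h2

theorem thetaF_top_aux {A : Type*} [HeytingAlgebra A] (F : Set A) :
    {x : A | thetaF F x ⊤} = F := by
  ext x
  simp [thetaF]

theorem anti_aux {A : Type*} [HeytingAlgebra A] {g h f p : A → A}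
    (H : IsTenseH g h f p) : ∀ u ∈ ({g, h, f, p} : Set (A → A)), Antitone u := by
  have k1 : ∀ u : A → A, (∀ x y, u (x ⊓ y) = u x ⊔ u y) → Antitone u := by
    intro u hu x y hxy
    have := hu x y
    rw [inf_eq_left.2 hxy] at this
    rw [this]
    exact le_sup_right
  have k2 : ∀ u : A → A, (∀ x y, u (x ⊔ y) = u x ⊓ u y) → Antitone u := by
    intro u hu x y hxy
    have := hu x y
    rw [sup_eq_right.2 hxy] at this
    rw [this]
    exact inf_le_left
  rintro u (rfl | rfl | rfl | rfl)
  · exact k1 _ H.t3g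
  · exact k1 _ H.t3h
  · exact k2 _ H.t4f
  · exact k2 _ H.t4p

theorem stmt10 {A : Type*} [HeytingAlgebra A] (g h f p : A → A)
    (H : IsTenseH g h f p) :
    (∀ F : Set A, IsNegTenseFilter g h f p F →
      IsTenseCongruence g h f p (thetaF F) ∧ {x : A | thetaF F x ⊤} = F) ∧
    (∀ θ : A → A → Prop, IsTenseCongruence g h f p θ →
      IsNegTenseFilter g h f p {x : A | θ x ⊤} ∧ thetaF {x : A | θ x ⊤} = θ) ∧
    (∀ F F' : Set A, IsNegTenseFilter g h f p F → IsNegTenseFilter g h f p F' →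
      (F ⊆ F' ↔ ∀ x y : A, thetaF F x y → thetaF F' x y)) := by
  refine ⟨?_, ?_, ?_⟩
  · intro F hN
    obtain ⟨hF, hu⟩ := hN
    have key := thetaF_iff_aux hF
    refine ⟨⟨⟨?_, ?_, ?_⟩, ?_, ?_, ?_, ?_⟩, thetaF_top_aux F⟩
    · intro x
      obtain ⟨c, hc⟩ := hF.1
      exact (key x x).2 ⟨c, hc, inf_le_right, inf_le_right⟩
    · intro x y hxy
      obtain ⟨c, hc, h1, h2⟩ := (key x y).1 hxy
      exact (key y x).2 ⟨c, hc, h2, h1⟩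
    · intro x y z hxy hyz
      obtain ⟨c, hc, h1, h2⟩ := (key x y).1 hxy
      obtain ⟨d, hd, h3, h4⟩ := (key y z).1 hyz
      exact (key x z).2 ⟨c ⊓ d, hF.2.2 _ _ hc hd, trans_aux h1 h3,
        inf_comm d c ▸ trans_aux h4 h2⟩
    · intro x y z w hxy hyz
      obtain ⟨c, hc, h1, h2⟩ := (key _ _).1 hxy
      obtain ⟨d, hd, h3, h4⟩ := (key _ _).1 hyz
      exact (key _ _).2 ⟨c ⊓ d, hF.2.2 _ _ hc hd, inf_aux h1 h3, inf_aux h2 h4⟩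
    · intro x y z w hxy hyz
      obtain ⟨c, hc, h1, h2⟩ := (key _ _).1 hxy
      obtain ⟨d, hd, h3, h4⟩ := (key _ _).1 hyz
      exact (key _ _).2 ⟨c ⊓ d, hF.2.2 _ _ hc hd, sup_aux h1 h3, sup_aux h2 h4⟩
    · intro x y z w hxy hyz
      obtain ⟨c, hc, h1, h2⟩ := (key _ _).1 hxy
      obtain ⟨d, hd, h3, h4⟩ := (key _ _).1 hyz
      exact (key _ _).2 ⟨c ⊓ d, hF.2.2 _ _ hc hd, himp_aux h2 h3, himp_aux h1 h4⟩
    · intro u hmem x y hxy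
      exact hF.2.2 _ _ (hu u hmem _ _ (hF.2.1 _ _ hxy inf_le_right))
        (hu u hmem _ _ (hF.2.1 _ _ hxy inf_le_left))
  · intro θ hθ
    obtain ⟨he, hi, hs, hm, hu⟩ := hθ
    have up : ∀ x y : A, θ x ⊤ → x ≤ y → θ y ⊤ := by
      intro x y hx hxy
      have := hs _ _ _ _ hx (he.refl y)
      rwa [sup_eq_right.2 hxy, top_sup_eq] at this
    have imp : ∀ x y : A, θ (x ⇨ y) ⊤ → θ (x ⊓ y) x := by
      intro x y hxy
      have := hi _ _ _ _ (he.refl x) hxy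
      rwa [inf_himp, inf_top_eq] at this
    refine ⟨⟨⟨⟨⊤, he.refl _⟩, up, ?_⟩, ?_⟩, ?_⟩
    · intro x y hx hy
      have := hi _ _ _ _ hx hy
      rwa [inf_top_eq] at this
    · intro u hmem x y hxy
      have h1 := hu u hmem _ _ (imp x y hxy)
      have h2 := hm _ _ _ _ (he.refl (u y)) h1
      have h3 : u y ⇨ u (x ⊓ y) = ⊤ := himp_eq_top_iff.2 (anti_aux H u hmem inf_le_right)
      rw [h3] at h2
      exact he.symm h2
    · funext x y
      apply propext
      constructor
      · intro hxy
        have h1 := imp x y (up _ _ hxy inf_le_left)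
        have h2 := imp y x (up _ _ hxy inf_le_right)
        rw [inf_comm] at h2
        exact he.trans (he.symm h1) h2
      · intro hxy
        have h1 := hm _ _ _ _ hxy (he.refl y)
        have h2 := hm _ _ _ _ (he.refl y) hxy
        have h3 := hi _ _ _ _ h1 h2
        rwa [himp_self, inf_top_eq] at h3
  · intro F F' _ _
    constructor
    · intro hs x y hxy
      exact hs hxy
    · intro hs x hx
      rw [← thetaF_top_aux F] at hx
      rw [← thetaF_top_aux F']
      exact hs _ _ hx
end

section
/- Let (A, g, h, f, p) be a tense H-algebra with 0 ≠ 1, define [N](a) = ¬g(a) ⊓ ¬h(a) (where ¬x = x ⇨ 0), let [N]⁰(a) = a, [N]ⁿ⁺¹(a) = [N]([N]ⁿ(a)), and [N]⁽ᵏ⁾(a) = [N]⁰(a) ⊓ [N]¹(a) ⊓ ⋯ ⊓ [N]ᵏ(a). Then (A, g, h, f, p) is simple — i.e. its only congruences (equivalence relations on A compatible with ⊓, ⊔, ⇨, g, h, f and p) are the equality relation and the total relation A × A — if and only if for every a ∈ A with a ≠ 1 there exists k ∈ ℕ such that [N]⁽ᵏ⁾(a) = 0. -/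
theorem aux_N_inf {A : Type*} [HeytingAlgebra A] {g h f p : A → A}
    (H : IsTenseH g h f p) (x y : A) : Nop g h (x ⊓ y) = Nop g h x ⊓ Nop g h y := by
  simp only [Nop, H.t3g, H.t3h, sup_himp_distrib]
  ac_rfl

theorem aux_N_mono {A : Type*} [HeytingAlgebra A] {g h f p : A → A}
    (H : IsTenseH g h f p) {x y : A} (hxy : x ≤ y) : Nop g h x ≤ Nop g h y := by
  have := aux_N_inf H x y
  rw [inf_eq_left.mpr hxy] at this
  rw [this]; exact inf_le_right

theorem aux_par_anti {A : Type*} [HeytingAlgebra A] (N : A → A) (a : A) :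
    Antitone (fun k => NPar N k a) :=
  antitone_nat_of_succ_le fun _ => inf_le_left

theorem aux_par_succ {A : Type*} [HeytingAlgebra A] {g h f p : A → A}
    (H : IsTenseH g h f p) (a : A) (k : ℕ) :
    NPar (Nop g h) (k + 1) a ≤ Nop g h (NPar (Nop g h) k a) := by
  induction k with
  | zero => exact inf_le_right
  | succ k ih =>
    change _ ≤ Nop g h (NPar (Nop g h) k a ⊓ NIter (Nop g h) (k + 1) a)
    rw [aux_N_inf H]
    exact inf_le_inf ih le_rfl

theorem aux_himp {A : Type*} [HeytingAlgebra A] {c x₁ x₂ y₁ y₂ : A}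
    (h1 : c ⊓ y₁ ≤ x₁) (h2 : c ⊓ x₂ ≤ y₂) : c ⊓ (x₁ ⇨ x₂) ≤ y₁ ⇨ y₂ := by
  rw [le_himp_iff]
  refine le_trans (le_inf (inf_le_left.trans inf_le_left) ?_) h2
  have h3 : c ⊓ (x₁ ⇨ x₂) ⊓ y₁ ≤ x₁ :=
    le_trans (le_inf (inf_le_left.trans inf_le_left) inf_le_right) h1
  exact le_trans (le_inf (inf_le_left.trans inf_le_right) h3) himp_inf_le

theorem aux_cancel {A : Type*} [HeytingAlgebra A] {n s t r : A}
    (h1 : n ≤ r ⇨ ⊥) (h2 : t ≤ r ⊔ s) : n ⊓ t ≤ s := by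
  refine (inf_le_inf h1 h2).trans ?_
  rw [inf_sup_left]
  exact sup_le (himp_inf_le.trans bot_le) inf_le_right

theorem aux_ops {A : Type*} [HeytingAlgebra A] {g h f p : A → A}
    (H : IsTenseH g h f p) (u : A → A) (hu : u ∈ ({g, h, f, p} : Set (A → A)))
    {c x y : A} (hc : c ⊓ x ≤ y) : Nop g h c ⊓ u y ≤ u x := by
  have e : c ⊓ x ⊔ y = y := sup_eq_right.mpr hc
  have e' : y ⊓ (c ⊓ x) = c ⊓ x := inf_eq_right.mpr hc
  simp only [Set.mem_insert_iff, Set.mem_singleton_iff] at hu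
  rcases hu with rfl | rfl | rfl | rfl
  · refine aux_cancel (r := u c) inf_le_left ?_
    rw [← H.t3g, ← e', H.t3g]; exact le_sup_left
  · refine aux_cancel (r := u c) inf_le_right ?_
    rw [← H.t3h, ← e', H.t3h]; exact le_sup_left
  · refine aux_cancel (r := g c) inf_le_left ?_
    rw [← e, H.t4f, sup_comm]
    refine inf_le_left.trans ?_
    rw [inf_comm]; exact H.t8f x c
  · refine aux_cancel (r := h c) inf_le_right ?_
    rw [← e, H.t4p, sup_comm]
    refine inf_le_left.trans ?_
    rw [inf_comm]; exact H.t8p x c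

theorem stmt16 {A : Type*} [HeytingAlgebra A] (g h f p : A → A)
    (H : IsTenseH g h f p) (h01 : (⊥ : A) ≠ ⊤) :
    (∀ θ : A → A → Prop, IsTenseCongruence g h f p θ →
        (∀ x y : A, θ x y ↔ x = y) ∨ (∀ x y : A, θ x y)) ↔
      ∀ a : A, a ≠ ⊤ → ∃ k : ℕ, NPar (Nop g h) k a = ⊥ := by
  constructor
  · intro hs a ha
    have anti := aux_par_anti (Nop g h) a
    let θ : A → A → Prop := fun x y =>
      ∃ k, NPar (Nop g h) k a ⊓ x ≤ y ∧ NPar (Nop g h) k a ⊓ y ≤ x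
    have up : ∀ {k l : ℕ} {x y : A}, k ≤ l → NPar (Nop g h) k a ⊓ x ≤ y →
        NPar (Nop g h) l a ⊓ x ≤ y := fun hkl hx =>
      (inf_le_inf_right _ (anti hkl)).trans hx
    have both : ∀ {x₁ y₁ x₂ y₂ : A}, θ x₁ y₁ → θ x₂ y₂ → ∃ c, (∃ k, c = NPar (Nop g h) k a) ∧
        (c ⊓ x₁ ≤ y₁ ∧ c ⊓ y₁ ≤ x₁) ∧ (c ⊓ x₂ ≤ y₂ ∧ c ⊓ y₂ ≤ x₂) := by
      rintro x₁ y₁ x₂ y₂ ⟨k, h1, h2⟩ ⟨l, h3, h4⟩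
      exact ⟨_, ⟨max k l, rfl⟩, ⟨up (le_max_left _ _) h1, up (le_max_left _ _) h2⟩,
        up (le_max_right _ _) h3, up (le_max_right _ _) h4⟩
    have tr : ∀ {c x y z : A}, c ⊓ x ≤ y → c ⊓ y ≤ z → c ⊓ x ≤ z := fun h1 h2 =>
      (le_inf inf_le_left h1).trans h2
    have hθ : IsTenseCongruence g h f p θ := by
      refine ⟨⟨fun x => ⟨0, inf_le_right, inf_le_right⟩, fun ⟨k, h1, h2⟩ => ⟨k, h2, h1⟩, ?_⟩,
        ?_, ?_, ?_, ?_⟩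
      · intro x y z h1 h2
        obtain ⟨_, ⟨k, rfl⟩, ⟨h1, h2⟩, h3, h4⟩ := both h1 h2
        exact ⟨k, tr h1 h3, tr h4 h2⟩
      · intro x₁ y₁ x₂ y₂ h1 h2
        obtain ⟨_, ⟨k, rfl⟩, ⟨h1, h2⟩, h3, h4⟩ := both h1 h2
        refine ⟨k, ?_, ?_⟩
        · exact le_inf ((inf_le_inf_left _ inf_le_left).trans h1)
            ((inf_le_inf_left _ inf_le_right).trans h3)
        · exact le_inf ((inf_le_inf_left _ inf_le_left).trans h2)
            ((inf_le_inf_left _ inf_le_right).trans h4)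
      · intro x₁ y₁ x₂ y₂ h1 h2
        obtain ⟨_, ⟨k, rfl⟩, ⟨h1, h2⟩, h3, h4⟩ := both h1 h2
        refine ⟨k, ?_, ?_⟩
        · rw [inf_sup_left]; exact sup_le_sup h1 h3
        · rw [inf_sup_left]; exact sup_le_sup h2 h4
      · intro x₁ y₁ x₂ y₂ h1 h2
        obtain ⟨_, ⟨k, rfl⟩, ⟨h1, h2⟩, h3, h4⟩ := both h1 h2
        exact ⟨k, aux_himp h2 h3, aux_himp h1 h4⟩
      · rintro u hu x y ⟨k, h1, h2⟩
        exact ⟨k + 1, (inf_le_inf_right _ (aux_par_succ H a k)).trans (aux_ops H u hu h2),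
          (inf_le_inf_right _ (aux_par_succ H a k)).trans (aux_ops H u hu h1)⟩
    rcases hs θ hθ with h1 | h1
    · exact absurd ((h1 a ⊤).mp ⟨0, le_top, inf_le_left⟩) ha
    · obtain ⟨k, _, hk⟩ := h1 ⊥ ⊤
      exact ⟨k, by simpa using hk⟩
  · rintro hs θ ⟨heq, hinf, hsup, himp, hop⟩
    by_cases hid : ∀ x y, θ x y → x = y
    · exact Or.inl fun x y => ⟨hid x y, fun e => e ▸ heq.refl x⟩
    right
    push Not at hid
    obtain ⟨x, y, hxy, hne⟩ := hid
    have hyx := heq.symm hxy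
    have ha : θ ((x ⇨ y) ⊓ (y ⇨ x)) ⊤ := by
      have h1 := hinf _ _ _ _ (himp _ _ _ _ hxy (heq.refl y)) (himp _ _ _ _ (heq.refl y) hxy)
      simpa using h1
    have hane : (x ⇨ y) ⊓ (y ⇨ x) ≠ ⊤ := by
      intro e
      rw [inf_eq_top_iff, himp_eq_top_iff, himp_eq_top_iff] at e
      exact hne (le_antisymm e.1 e.2)
    obtain ⟨k, hk⟩ := hs _ hane
    have hN : ∀ b, θ b ⊤ → θ (Nop g h b) ⊤ := by
      intro b hb
      have h1 := hinf _ _ _ _ (himp _ _ _ _ (hop g (by simp) _ _ hb) (heq.refl ⊥))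
        (himp _ _ _ _ (hop h (by simp) _ _ hb) (heq.refl ⊥))
      simpa [Nop, H.t1g, H.t1h] using h1
    have hI : ∀ n, θ (NIter (Nop g h) n ((x ⇨ y) ⊓ (y ⇨ x))) ⊤ := by
      intro n
      induction n with
      | zero => exact ha
      | succ n ih => exact hN _ ih
    have hP : ∀ n, θ (NPar (Nop g h) n ((x ⇨ y) ⊓ (y ⇨ x))) ⊤ := by
      intro n
      induction n with
      | zero => exact ha
      | succ n ih => simpa [NPar] using hinf _ _ _ _ ih (hI (n + 1))
    have hbt : θ ⊥ ⊤ := hk ▸ hP k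
    have hall : ∀ z, θ ⊥ z := fun z => by
      simpa using hinf _ _ _ _ hbt (heq.refl z)
    exact fun z w => heq.trans (heq.symm (hall z)) (hall w)
end
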